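/- For every natural number g ≥ 4 with g ≡ 1 (mod 3) there exist permutations σ₀, σ₁ of Fin (8g + 4) such that: the cycle type of σ₀ consists of 4g + 2 copies of 2; the cycle type of σ₁ consists of 2g + 1 copies of 4; the cycle type of σ₁σ₀ consists of 3 copies of (8g + 4)/3 (three disjoint cycles of equal length); the subgroup generated by σ₀ and σ₁ acts transitively on Fin (8g + 4); and the cycle type of σ₁²σ₀ is the multiset {4g + 2, 4g + 2}. (This is the combinatorial content of the existence, for every genus g > 1 congruent to 1 mod 3, of a uniform filling curve in general position whose complement has exactly three faces, whose length function is minimized on a surface uniformized by a surface subgroup of Δ(2,4,(8g+4)/3).) -/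

import Mathlib

/-!
A filling curve in general position, traversed once, is a cyclic sequence of passages through its
crossings, paired by crossing; the surface is recovered from the sign of each passage. Suppose that
such a curve of genus `h` has a single complementary face, which then has `2 * (4 * h - 2)` sides,
and take a cyclic `d`-fold cover of the dessin given by voltages on its edges. The face runs along
each edge once in each direction, so its total voltage vanishes and it lifts to `d` faces of the
same degree. The curve runs along each edge only once, so if a single edge carries a generator as
its voltage and all others carry zero, the curve lifts to one curve, which closes up after `d`
turns. The cover has genus `d * (h - 1) + 1`.

Curves with a single complementary face exist in each genus `h ≥ 2`: there is an explicit one with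
three crossings in genus two, and the genus is raised by one when an edge is rerouted
through a new handle, with two new crossings, keeping both the curve and the face connected.
-/

open Equiv Function

section Perm

variable {α β : Type*}

theorem isCycleOn_univ_iff {f : Perm α} :
    f.IsCycleOn Set.univ ↔ ∀ x y, f.SameCycle x y :=
  ⟨fun h _ _ => h.2 trivial trivial,
    fun h => ⟨Set.bijOn_univ.2 f.bijective, fun x _ y _ => h x y⟩⟩

theorem sameCycle_of_apply_eq {f : Perm α} {x y : α} (h : f x = y) : f.SameCycle x y :=
  h ▸ Perm.SameCycle.rfl.apply_right

theorem sameCycle_of_isChain_cons {f : Perm α} {l : List α} {x y : α}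
    (h : (x :: l).IsChain (f · = ·)) (hy : y ∈ l) : f.SameCycle x y :=
  haveI : IsTrans α f.SameCycle := ⟨fun _ _ _ => Perm.SameCycle.trans⟩
  List.rel_of_pairwise_cons (h.imp fun _ _ => sameCycle_of_apply_eq).pairwise hy

theorem sameCycle_map_of_forall_sameCycle {f : Perm α} {F : Perm β} {ι : α → β}
    (h : ∀ x, F.SameCycle (ι x) (ι (f x))) {x y : α} (hxy : f.SameCycle x y) :
    F.SameCycle (ι x) (ι y) := by
  obtain ⟨n, rfl⟩ := hxy
  induction n with
  | zero => rfl
  | succ n ih =>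
    rw [add_comm, zpow_one_add, Perm.mul_apply]
    exact ih.trans (h _)
  | pred n ih =>
    refine ih.trans (Perm.SameCycle.symm ?_)
    simpa [← Perm.mul_apply, ← zpow_one_add] using h ((f ^ (-n - 1 : ℤ)) x)

theorem isCycleOn_univ_of_firstReturn {f : Perm α} {F : Perm β} (ι : α → β)
    (hf : f.IsCycleOn Set.univ) (hreturn : ∀ x, F.SameCycle (ι x) (ι (f x)))
    (hmeet : ∀ y, ∃ x, F.SameCycle (ι x) y) : F.IsCycleOn Set.univ := by
  rw [isCycleOn_univ_iff] at hf ⊢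
  intro y z
  obtain ⟨x, hx⟩ := hmeet y
  obtain ⟨w, hw⟩ := hmeet z
  exact hx.symm.trans ((sameCycle_map_of_forall_sameCycle hreturn (hf x w)).trans hw)

theorem minimalPeriod_eq_card {f : Perm α} {s : Finset α} (hf : f.IsCycleOn s) {x : α}
    (hx : x ∈ s) : minimalPeriod f x = s.card := by
  refine Nat.dvd_right_iff_eq.1 fun n => ?_
  rw [← isPeriodicPt_iff_minimalPeriod_dvd, ← hf.pow_apply_eq hx, ← Perm.iterate_eq_pow]
  rfl

theorem minimalPeriod_eq_of_semiconj {f : α → α} {F : β → β} {ι : α → β}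
    (hι : Injective ι) (h : Semiconj ι f F) (x : α) :
    minimalPeriod F (ι x) = minimalPeriod f x := by
  refine minimalPeriod_eq_minimalPeriod_iff.2 fun n => ?_
  rw [IsPeriodicPt, IsFixedPt, ← (h.iterate_right n).eq, hι.eq_iff, IsPeriodicPt, IsFixedPt]

variable [Fintype α]

theorem minimalPeriod_eq_card_univ {f : Perm α} (hf : f.IsCycleOn Set.univ) (x : α) :
    minimalPeriod f x = Fintype.card α :=
  minimalPeriod_eq_card (s := .univ) (by simpa using hf) (Finset.mem_univ x)

variable [DecidableEq α]

theorem cycleType_eq_replicate {f : Perm α} {L k : ℕ} (hL : 1 < L)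
    (hcard : Fintype.card α = k * L) (h : ∀ x, minimalPeriod f x = L) :
    f.cycleType = Multiset.replicate k L := by
  have hlengths : ∀ n ∈ f.cycleType, n = L := by
    intro n hn
    obtain ⟨c, hc, rfl⟩ := Multiset.mem_map.1 (f.cycleType_def ▸ hn)
    obtain ⟨x, hx⟩ := (Perm.mem_cycleFactorsFinset_iff.1 hc).1.nonempty_support
    have hcycle := Perm.isCycleOn_support_of_mem_cycleFactorsFinset hc
    exact (minimalPeriod_eq_card hcycle hx).symm.trans (h x)
  have hsupport : f.support = Finset.univ := by
    refine Finset.eq_univ_of_forall fun x => Perm.mem_support.2 fun hx => ?_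
    exact hL.ne' ((h x).symm.trans (minimalPeriod_eq_one_iff_isFixedPt.2 hx))
  have hreplicate := Multiset.eq_replicate_of_mem hlengths
  have hsum : f.cycleType.card * L = k * L := by
    rw [← hcard, ← Finset.card_univ, ← hsupport, ← f.sum_cycleType, hreplicate,
      Multiset.sum_replicate, Multiset.card_replicate, smul_eq_mul]
  rw [hreplicate, Nat.eq_of_mul_eq_mul_right (by omega) hsum]

theorem cycleType_permCongr [Fintype β] [DecidableEq β] (e : α ≃ β) (f : Perm α) :
    (e.permCongr f).cycleType = f.cycleType := by
  rw [← Perm.cycleType_extendDomain (p := fun _ : β => True)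
    (e.trans (subtypeUnivEquiv fun _ => trivial).symm)]
  congr 1

end Perm

section SkewProduct

variable {α A : Type*} [AddCommGroup A]

/-- The skew product of `f` with `v`: it acts by `f` on the base and translates the fibre over `x`
by `v x`. Voltage covers are described by such permutations. -/
def skewProduct (f : Perm α) (v : α → A) : Perm (α × A) :=
  prodShear f fun x => Equiv.addRight (v x)

theorem skewProduct_apply (f : Perm α) (v : α → A) (z : α × A) :
    skewProduct f v z = (f z.1, z.2 + v z.1) :=
  rfl

theorem skewProduct_iterate (f : Perm α) (v : α → A) (n : ℕ) (z : α × A) :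
    (skewProduct f v)^[n] z = (f^[n] z.1, z.2 + birkhoffSum f v n z.1) := by
  induction n with
  | zero => simp
  | succ n ih =>
    rw [iterate_succ_apply', ih, skewProduct_apply, ← iterate_succ_apply' f, birkhoffSum_succ,
      add_assoc]

variable [Fintype α]

theorem birkhoffSum_card {f : Perm α} (hf : f.IsCycleOn Set.univ) (v : α → A) (x : α) :
    birkhoffSum f v (Fintype.card α) x = ∑ y, v y := by
  have hperiod := minimalPeriod_eq_card_univ hf x
  refine Finset.sum_bij (fun n _ => f^[n] x) (by simp) ?_ ?_ (by simp)
  · intro m hm n hn h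
    rw [← hperiod, Finset.mem_range] at hm hn
    exact iterate_injOn_Iio_minimalPeriod hm hn h
  · intro y _
    obtain ⟨n, hn, rfl⟩ := Perm.IsCycleOn.exists_pow_eq (s := .univ) (by simpa using hf)
      (Finset.mem_univ x) (Finset.mem_univ y)
    exact ⟨n, Finset.mem_range.2 hn, by rw [Perm.iterate_eq_pow]⟩

theorem skewProduct_iterate_card {f : Perm α} (hf : f.IsCycleOn Set.univ) (v : α → A)
    (z : α × A) :
    (skewProduct f v)^[Fintype.card α] z = (z.1, z.2 + ∑ x, v x) := by
  have hperiod : f^[Fintype.card α] z.1 = z.1 := by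
    rw [← minimalPeriod_eq_card_univ hf z.1, iterate_minimalPeriod]
  rw [skewProduct_iterate, birkhoffSum_card hf, hperiod]

theorem minimalPeriod_skewProduct {f : Perm α} {v : α → A} (hf : f.IsCycleOn Set.univ)
    (hv : ∑ x, v x = 0) (z : α × A) :
    minimalPeriod (skewProduct f v) z = Fintype.card α := by
  refine Nat.dvd_antisymm (IsPeriodicPt.minimalPeriod_dvd ?_) ?_
  · rw [IsPeriodicPt, IsFixedPt, skewProduct_iterate_card hf, hv, add_zero]
  · have hz := congrArg Prod.fst (iterate_minimalPeriod (f := skewProduct f v) (x := z))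
    rw [skewProduct_iterate] at hz
    rw [← minimalPeriod_eq_card_univ hf z.1]
    exact IsPeriodicPt.minimalPeriod_dvd hz

theorem isCycleOn_skewProduct {f : Perm α} {v : α → A} (hf : f.IsCycleOn Set.univ)
    (hv : ∀ a, a ∈ AddSubgroup.zmultiples (∑ x, v x)) :
    (skewProduct f v).IsCycleOn Set.univ := by
  rw [isCycleOn_univ_iff]
  set F := skewProduct f v
  have hfiber (x : α) (i j : A) : F.SameCycle (x, i) (x, j) := by
    obtain ⟨n, hn⟩ := AddSubgroup.mem_zmultiples_iff.1 (hv (j - i))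
    refine sameCycle_map_of_forall_sameCycle (f := Equiv.addRight (∑ x, v x)) (ι := (x, ·))
      (fun i => ⟨Fintype.card α, ?_⟩) ⟨n, ?_⟩
    · rw [zpow_natCast, ← Perm.iterate_eq_pow, skewProduct_iterate_card hf, coe_addRight]
    · rw [zsmul_addRight, hn]
      exact add_sub_cancel i j
  rintro ⟨x, i⟩ ⟨y, j⟩
  obtain ⟨n, hn⟩ := (isCycleOn_univ_iff.1 hf x y).exists_nat_pow_eq
  have hxy : F.SameCycle (x, i) (y, i + birkhoffSum f v n x) := by
    refine ⟨n, ?_⟩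
    rw [zpow_natCast, ← Perm.iterate_eq_pow, skewProduct_iterate, Perm.iterate_eq_pow, hn]
  exact hxy.trans (hfiber y _ j)

end SkewProduct

/-- A signed Gauss diagram, encoding a multicurve in general position on an oriented surface: `P` is
the set of passages of the multicurve through its crossings, `next p` is the passage following `p`
along the multicurve, and `mate p` is the other passage through the crossing of `p`. The passage
`p` has the outgoing dart `(p, true)` and the incoming dart `(p, false)`; `sign p` tells whether
the outgoing dart of `p` is followed, in the cyclic order around its crossing, by the outgoing or
by the incoming dart of `mate p`. -/
structure GaussDiagram (P : Type*) where
  next : Perm P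
  mate : P → P
  sign : P → Bool
  mate_involutive : Involutive mate
  sign_mate : ∀ p, sign (mate p) = !sign p

namespace GaussDiagram

variable {P A : Type*} (D : GaussDiagram P)

/-- The permutation of the darts exchanging the two ends of each edge. -/
def edgePerm : Perm (P × Bool) where
  toFun x := (bif x.2 then D.next x.1 else D.next.symm x.1, !x.2)
  invFun x := (bif x.2 then D.next x.1 else D.next.symm x.1, !x.2)
  left_inv := by rintro ⟨p, _ | _⟩ <;> simp
  right_inv := by rintro ⟨p, _ | _⟩ <;> simp

/-- The rotation of the darts around the crossings. -/
def vertexPerm : Perm (P × Bool) where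
  toFun x := (D.mate x.1, x.2 == D.sign x.1)
  invFun x := (D.mate x.1, x.2 == D.sign (D.mate x.1))
  left_inv := by rintro ⟨p, _ | _⟩ <;> simp [D.mate_involutive p]
  right_inv := by rintro ⟨p, _ | _⟩ <;> simp [D.mate_involutive p]

/-- The permutation of the darts whose cycles are the boundaries of the complementary faces. -/
abbrev facePerm : Perm (P × Bool) :=
  D.vertexPerm * D.edgePerm

/-- The permutation of the darts that goes straight ahead at each crossing; each curve gives two
cycles, one for each direction of travel. -/
abbrev curvePerm : Perm (P × Bool) :=
  D.vertexPerm ^ 2 * D.edgePerm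

/-- The multicurve consists of a single curve. -/
def IsUnicursal : Prop :=
  D.next.IsCycleOn Set.univ

/-- The multicurve has a single complementary face. -/
def IsUnicellular : Prop :=
  D.facePerm.IsCycleOn Set.univ

theorem edgePerm_apply_true (p : P) : D.edgePerm (p, true) = (D.next p, false) :=
  rfl

theorem edgePerm_apply_false (p : P) : D.edgePerm (p, false) = (D.next.symm p, true) :=
  rfl

theorem vertexPerm_apply (p : P) (b : Bool) :
    D.vertexPerm (p, b) = (D.mate p, b == D.sign p) :=
  rfl

theorem facePerm_apply_true {p q : P} (h : D.next p = q) :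
    D.facePerm (p, true) = (D.mate q, !D.sign q) := by
  simp [edgePerm_apply_true, vertexPerm_apply, h]

theorem facePerm_apply_false {p q : P} (h : D.next p = q) :
    D.facePerm (q, false) = (D.mate p, D.sign p) := by
  simp [edgePerm_apply_false, vertexPerm_apply, ← h]

theorem vertexPerm_sq_apply (p : P) (b : Bool) : (D.vertexPerm ^ 2) (p, b) = (p, !b) := by
  cases b <;> cases h : D.sign p <;>
    simp [pow_two, vertexPerm_apply, D.mate_involutive p, D.sign_mate, h]

theorem curvePerm_apply_true (p : P) :
    D.curvePerm (p, true) = (D.next p, true) := by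
  simp [edgePerm_apply_true, vertexPerm_sq_apply]

theorem curvePerm_apply_false (p : P) :
    D.curvePerm (p, false) = (D.next.symm p, false) := by
  simp [edgePerm_apply_false, vertexPerm_sq_apply]

theorem minimalPeriod_edgePerm (x : P × Bool) : minimalPeriod D.edgePerm x = 2 := by
  refine minimalPeriod_eq_prime (D.edgePerm.left_inv x) fun h => ?_
  simpa [edgePerm] using congrArg Prod.snd h

theorem minimalPeriod_vertexPerm (x : P × Bool) : minimalPeriod D.vertexPerm x = 4 := by
  have hsq (y : P × Bool) : D.vertexPerm^[2] y = (y.1, !y.2) := by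
    rw [Perm.iterate_eq_pow, vertexPerm_sq_apply]
  refine minimalPeriod_eq_prime_pow (p := 2) (k := 1) (fun h => ?_) ?_
  · simpa [hsq] using congrArg Prod.snd h
  · change D.vertexPerm^[2 + 2] x = x
    rw [iterate_add_apply, hsq, hsq, Bool.not_not]

theorem minimalPeriod_curvePerm [Fintype P] (hD : D.IsUnicursal) (x : P × Bool) :
    minimalPeriod D.curvePerm x = Fintype.card P := by
  obtain ⟨p, _ | _⟩ := x
  · rw [minimalPeriod_eq_of_semiconj (ι := (·, false)) (f := ⇑D.next⁻¹)
        (Prod.mk_left_injective _) (fun q => (D.curvePerm_apply_false q).symm),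
      minimalPeriod_eq_card_univ (Perm.isCycleOn_inv.2 hD)]
  · rw [minimalPeriod_eq_of_semiconj (ι := (·, true)) (f := D.next)
        (Prod.mk_left_injective _) (fun q => (D.curvePerm_apply_true q).symm),
      minimalPeriod_eq_card_univ hD]

theorem exists_mem_closure_apply_eq (hD : D.IsUnicursal) (x y : P × Bool) :
    ∃ π ∈ Subgroup.closure {D.edgePerm, D.vertexPerm}, π x = y := by
  set G := Subgroup.closure {D.edgePerm, D.vertexPerm}
  have hedge : D.edgePerm ∈ G := Subgroup.subset_closure (by simp)
  have hvertex : D.vertexPerm ∈ G := Subgroup.subset_closure (by simp)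
  have hforward (p q : P) : ∃ π ∈ G, π (p, true) = (q, true) := by
    have hcurve := sameCycle_map_of_forall_sameCycle (ι := (·, true))
      (fun r => sameCycle_of_apply_eq (D.curvePerm_apply_true r)) (isCycleOn_univ_iff.1 hD p q)
    obtain ⟨n, hn⟩ := hcurve
    exact ⟨_, zpow_mem (mul_mem (pow_mem hvertex 2) hedge) n, hn⟩
  have hflip (p : P) (b : Bool) : ∃ π ∈ G, π (p, b) = (p, true) := by
    cases b
    · exact ⟨_, pow_mem hvertex 2, D.vertexPerm_sq_apply p false⟩
    · exact ⟨1, one_mem _, rfl⟩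
  obtain ⟨ρ, hρ, hρx⟩ := hflip x.1 x.2
  obtain ⟨τ, hτ, hτx⟩ := hforward x.1 y.1
  obtain ⟨κ, hκ, hκy⟩ := hflip y.1 y.2
  exact ⟨κ⁻¹ * τ * ρ, mul_mem (mul_mem (inv_mem hκ) hτ) hρ, by
    rw [Perm.mul_apply, Perm.mul_apply, hρx, hτx, Perm.inv_eq_iff_eq, hκy]⟩

section Cover

variable [AddCommGroup A] (w : P → A)

/-- The abelian cover with deck group `A` in which the edge from `p` to `next p` has voltage
`w p`. -/
def cover : GaussDiagram (P × A) where
  next := skewProduct D.next w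
  mate := Prod.map D.mate id
  sign z := D.sign z.1
  mate_involutive := D.mate_involutive.prodMap fun _ => rfl
  sign_mate z := D.sign_mate z.1

/-- The voltage of the edge traversed when leaving its crossing along the dart `x`. -/
def dartVoltage (x : P × Bool) : A :=
  bif x.2 then w x.1 else -w (D.next.symm x.1)

theorem sum_dartVoltage [Fintype P] : ∑ x, D.dartVoltage w x = 0 := by
  simp [Fintype.sum_prod_type, dartVoltage, Finset.sum_add_distrib, Equiv.sum_comp D.next.symm w]

theorem facePerm_cover_apply (z : (P × Bool) × A) :
    (D.cover w).facePerm ((z.1.1, z.2), z.1.2) =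
      (((D.facePerm z.1).1, z.2 + D.dartVoltage w z.1), (D.facePerm z.1).2) := by
  obtain ⟨⟨q, _ | _⟩, i⟩ := z
  · obtain ⟨p, rfl⟩ := D.next.surjective q
    have hnext : (D.cover w).next (p, i - w p) = (D.next p, i) :=
      Prod.ext rfl (sub_add_cancel i (w p))
    rw [facePerm_apply_false _ hnext, facePerm_apply_false D rfl]
    simp [cover, dartVoltage, sub_eq_add_neg]
  · rw [facePerm_apply_true _ rfl, facePerm_apply_true D rfl]
    rfl

theorem minimalPeriod_facePerm_cover [Fintype P] (hD : D.IsUnicellular) (z : (P × A) × Bool) :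
    minimalPeriod (D.cover w).facePerm z = 2 * Fintype.card P := by
  have hinj : Injective fun z : (P × Bool) × A => ((z.1.1, z.2), z.1.2) := by
    rintro ⟨⟨p, b⟩, i⟩ ⟨⟨q, c⟩, j⟩ h
    grind
  have hperiod := minimalPeriod_eq_of_semiconj (f := skewProduct D.facePerm (D.dartVoltage w))
    hinj (fun z => (D.facePerm_cover_apply w z).symm) ((z.1.1, z.2), z.1.2)
  rw [hperiod, minimalPeriod_skewProduct hD (D.sum_dartVoltage w), Fintype.card_prod,
    Fintype.card_bool, mul_comm]

theorem isUnicursal_cover [Fintype P] (hD : D.IsUnicursal)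
    (hw : ∀ a, a ∈ AddSubgroup.zmultiples (∑ p, w p)) : (D.cover w).IsUnicursal :=
  isCycleOn_skewProduct hD hw

end Cover

section InsertHandle

open Sum (inl inr)

variable [DecidableEq P] (a : P)

/-- The edge leaving the passage `a` is rerouted through a new handle, along a loop of four new
passages `0, 1, 2, 3` that meets itself in the two crossings `{0, 2}` and `{1, 3}`. -/
def insertHandle : GaussDiagram (P ⊕ Fin 4) where
  next := sumCongr D.next (finRotate 4) * Equiv.swap (inl a) (inr 3)
  mate := Sum.map D.mate (· + 2)
  sign := Sum.elim D.sign (· < 2)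
  mate_involutive := by
    rintro (p | j)
    · simp [D.mate_involutive p]
    · fin_cases j <;> rfl
  sign_mate := by
    rintro (p | j)
    · exact D.sign_mate p
    · fin_cases j <;> rfl

theorem insertHandle_next_inl_self : (D.insertHandle a).next (inl a) = inr 0 := by
  simp [insertHandle]

theorem insertHandle_next_inl_of_ne {p : P} (hp : p ≠ a) :
    (D.insertHandle a).next (inl p) = inl (D.next p) := by
  simp [insertHandle, swap_apply_of_ne_of_ne, hp]

theorem insertHandle_next_inr_of_ne {j : Fin 4} (hj : j ≠ 3) :
    (D.insertHandle a).next (inr j) = inr (j + 1) := by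
  simp [insertHandle, swap_apply_of_ne_of_ne, hj]

theorem insertHandle_next_inr_three : (D.insertHandle a).next (inr 3) = inl (D.next a) := by
  simp [insertHandle]

theorem isChain_insertHandle_next :
    [inl a, inr 0, inr 1, inr 2, inr 3, inl (D.next a)].IsChain
      ((D.insertHandle a).next · = ·) := by
  simp [insertHandle_next_inl_self, insertHandle_next_inr_of_ne, insertHandle_next_inr_three]

theorem isChain_insertHandle_facePerm_true :
    [(inl a, true), (inr 2, false), (inr 3, true),
      Prod.map inl id (D.facePerm (a, true))].IsChain
      ((D.insertHandle a).facePerm · = ·) := by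
  simp only [List.isChain_cons_cons, List.isChain_singleton, and_true]
  rw [facePerm_apply_true D rfl]
  exact ⟨facePerm_apply_true _ (D.insertHandle_next_inl_self a),
    facePerm_apply_false _ (D.insertHandle_next_inr_of_ne a (j := 1) (by decide)),
    facePerm_apply_true _ (D.insertHandle_next_inr_three a)⟩

theorem isChain_insertHandle_facePerm_false :
    [(inl (D.next a), false), (inr 1, false), (inr 2, true), (inr 1, true), (inr 0, true),
      (inr 3, false), (inr 0, false), Prod.map inl id (D.facePerm (D.next a, false))].IsChain
      ((D.insertHandle a).facePerm · = ·) := by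
  have hnext (j : Fin 4) (hj : j ≠ 3) := D.insertHandle_next_inr_of_ne a hj
  simp only [List.isChain_cons_cons, List.isChain_singleton, and_true]
  rw [facePerm_apply_false D rfl]
  exact ⟨facePerm_apply_false _ (D.insertHandle_next_inr_three a),
    facePerm_apply_false _ (hnext 0 (by decide)), facePerm_apply_true _ (hnext 2 (by decide)),
    facePerm_apply_true _ (hnext 1 (by decide)), facePerm_apply_true _ (hnext 0 (by decide)),
    facePerm_apply_false _ (hnext 2 (by decide)),
    facePerm_apply_false _ (D.insertHandle_next_inl_self a)⟩

theorem insertHandle_facePerm_true_of_ne {p : P} (hp : p ≠ a) :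
    (D.insertHandle a).facePerm (inl p, true) = Prod.map inl id (D.facePerm (p, true)) := by
  rw [facePerm_apply_true _ (D.insertHandle_next_inl_of_ne a hp), facePerm_apply_true D rfl]
  rfl

theorem insertHandle_facePerm_false_of_ne {p : P} (hp : p ≠ a) :
    (D.insertHandle a).facePerm (inl (D.next p), false) =
      Prod.map inl id (D.facePerm (D.next p, false)) := by
  rw [facePerm_apply_false _ (D.insertHandle_next_inl_of_ne a hp), facePerm_apply_false D rfl]
  rfl

theorem IsUnicursal.insertHandle {D : GaussDiagram P} (hD : D.IsUnicursal) (a : P) :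
    (D.insertHandle a).IsUnicursal := by
  have hcycle {y} := sameCycle_of_isChain_cons (D.isChain_insertHandle_next a) (y := y)
  refine isCycleOn_univ_of_firstReturn inl hD (fun p => ?_) ?_
  · obtain rfl | hp := eq_or_ne p a
    · exact hcycle (by simp)
    · exact sameCycle_of_apply_eq (D.insertHandle_next_inl_of_ne a hp)
  · rintro (p | j)
    · exact ⟨p, .rfl⟩
    · exact ⟨a, hcycle (by fin_cases j <;> simp)⟩

theorem IsUnicellular.insertHandle {D : GaussDiagram P} (hD : D.IsUnicellular) (a : P) :
    (D.insertHandle a).IsUnicellular := by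
  have hforward {y} := sameCycle_of_isChain_cons (D.isChain_insertHandle_facePerm_true a) (y := y)
  have hbackward {y} :=
    sameCycle_of_isChain_cons (D.isChain_insertHandle_facePerm_false a) (y := y)
  refine isCycleOn_univ_of_firstReturn (Prod.map inl id) hD ?_ ?_
  · rintro ⟨q, _ | _⟩
    · obtain ⟨p, rfl⟩ := D.next.surjective q
      obtain rfl | hp := eq_or_ne p a
      · exact hbackward (by simp)
      · exact sameCycle_of_apply_eq (D.insertHandle_facePerm_false_of_ne a hp)
    · obtain rfl | hp := eq_or_ne q a
      · exact hforward (by simp)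
      · exact sameCycle_of_apply_eq (D.insertHandle_facePerm_true_of_ne a hp)
  · rintro ⟨p | j, b⟩
    · exact ⟨(p, b), .rfl⟩
    · fin_cases j <;> cases b <;> first
        | refine ⟨(a, true), hforward ?_⟩; simp; done
        | refine ⟨(D.next a, false), hbackward ?_⟩; simp

end InsertHandle

/-- A diagram of genus two, with three crossings, the curve running through its passages in the
cyclic order of `Fin 6`. -/
def genusTwo : GaussDiagram (Fin 6) where
  next := finRotate 6
  mate := ![2, 4, 0, 5, 1, 3]
  sign := ![true, true, false, false, false, true]
  mate_involutive := by unfold Involutive; decide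
  sign_mate := by decide

theorem isUnicursal_genusTwo : genusTwo.IsUnicursal :=
  isCycleOn_univ_iff.2 (by decide)

theorem isUnicellular_genusTwo : genusTwo.IsUnicellular :=
  isCycleOn_univ_iff.2 (by decide)

theorem exists_isUnicursal_isUnicellular (k : ℕ) :
    ∃ (P : Type) (_ : Fintype P) (D : GaussDiagram P),
      Fintype.card P = 4 * k + 6 ∧ D.IsUnicursal ∧ D.IsUnicellular := by
  induction k with
  | zero => exact ⟨Fin 6, inferInstance, genusTwo, rfl, isUnicursal_genusTwo,
      isUnicellular_genusTwo⟩
  | succ k ih =>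
    classical
    obtain ⟨P, _, D, hcard, hcursal, hcellular⟩ := ih
    obtain ⟨a⟩ : Nonempty P := Fintype.card_pos_iff.1 (by omega)
    refine ⟨P ⊕ Fin 4, inferInstance, D.insertHandle a, ?_, hcursal.insertHandle a,
      hcellular.insertHandle a⟩
    rw [Fintype.card_sum, Fintype.card_fin, hcard]
    ring

theorem exists_isUnicursal_minimalPeriod_facePerm (k d : ℕ) [NeZero d] :
    ∃ (P : Type) (_ : Fintype P) (D : GaussDiagram P), Fintype.card P = d * (4 * k + 6) ∧
      D.IsUnicursal ∧ ∀ x, minimalPeriod D.facePerm x = 2 * (4 * k + 6) := by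
  classical
  obtain ⟨P, _, D, hcard, hcursal, hcellular⟩ := exists_isUnicursal_isUnicellular k
  obtain ⟨p⟩ : Nonempty P := Fintype.card_pos_iff.1 (by omega)
  refine ⟨P × ZMod d, inferInstance, D.cover (Pi.single p 1), ?_, ?_, fun x => ?_⟩
  · rw [Fintype.card_prod, ZMod.card, hcard, mul_comm]
  · refine D.isUnicursal_cover _ hcursal fun a => ?_
    obtain ⟨n, rfl⟩ := ZMod.intCast_surjective a
    exact AddSubgroup.mem_zmultiples_iff.2 ⟨n, by simp⟩
  · rw [D.minimalPeriod_facePerm_cover _ hcellular, hcard]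

end GaussDiagram

section Monodromy

variable {α β : Type*} [Fintype α] [DecidableEq α] [Fintype β] [DecidableEq β]

/-- `(σ₀, σ₁)` is the monodromy pair of a uniform filling curve in general position: it is
transitive, with edges `σ₀`, with `V` crossings `σ₁` of degree `4`, and with `d` faces of degree
`k`. The cycles of `σ₁ ^ 2 * σ₀` are the curve in its two directions of travel. -/
structure IsUniformFillingCurve (σ₀ σ₁ : Perm α) (V d k : ℕ) : Prop where
  cycleType_edge : σ₀.cycleType = Multiset.replicate (2 * V) 2
  cycleType_vertex : σ₁.cycleType = Multiset.replicate V 4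
  cycleType_face : (σ₁ * σ₀).cycleType = Multiset.replicate d k
  transitive : ∀ x y, ∃ π ∈ Subgroup.closure {σ₀, σ₁}, π x = y
  cycleType_curve : (σ₁ ^ 2 * σ₀).cycleType = {2 * V, 2 * V}

theorem IsUniformFillingCurve.permCongr {σ₀ σ₁ : Perm α} {V d k : ℕ}
    (h : IsUniformFillingCurve σ₀ σ₁ V d k) (e : α ≃ β) :
    IsUniformFillingCurve (e.permCongr σ₀) (e.permCongr σ₁) V d k where
  cycleType_edge := by rw [cycleType_permCongr, h.cycleType_edge]
  cycleType_vertex := by rw [cycleType_permCongr, h.cycleType_vertex]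
  cycleType_face := by rw [← permCongr_mul, cycleType_permCongr, h.cycleType_face]
  cycleType_curve := by
    rw [pow_two, ← permCongr_mul, ← permCongr_mul, cycleType_permCongr, ← pow_two,
      h.cycleType_curve]
  transitive x y := by
    obtain ⟨π, hπ, hxy⟩ := h.transitive (e.symm x) (e.symm y)
    refine ⟨e.permCongrHom π, ?_, by simp [hxy]⟩
    have hmap := Subgroup.mem_map_of_mem e.permCongrHom.toMonoidHom hπ
    rwa [MonoidHom.map_closure, Set.image_pair] at hmap

theorem GaussDiagram.isUniformFillingCurve {P : Type*} [Fintype P] [DecidableEq P]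
    {D : GaussDiagram P} {V d k : ℕ} (hcard : Fintype.card P = 2 * V) (hV : 0 < V)
    (hcursal : D.IsUnicursal) (hk : 1 < k) (hdk : d * k = 4 * V)
    (hface : ∀ x, minimalPeriod D.facePerm x = k) :
    IsUniformFillingCurve D.edgePerm D.vertexPerm V d k where
  cycleType_edge := cycleType_eq_replicate one_lt_two (by simp [hcard]) D.minimalPeriod_edgePerm
  cycleType_vertex := by
    refine cycleType_eq_replicate (by simp) ?_ D.minimalPeriod_vertexPerm
    rw [Fintype.card_prod, Fintype.card_bool, hcard]
    ring
  cycleType_face := by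
    refine cycleType_eq_replicate hk ?_ hface
    rw [Fintype.card_prod, Fintype.card_bool, hcard, hdk]
    ring
  transitive := D.exists_mem_closure_apply_eq hcursal
  cycleType_curve := by
    refine cycleType_eq_replicate (k := 2) (by omega) (by simp [hcard, mul_comm]) fun x => ?_
    rw [D.minimalPeriod_curvePerm hcursal, hcard]

end Monodromy

theorem exists_uniform_filling_curve_three_faces_general {α : Type*} [Fintype α] [DecidableEq α]
    {g d V : ℕ} (hg : 1 < g) (hmod : g ≡ 1 [MOD d]) (hV : V + 2 = 2 * g + d)
    (hα : Fintype.card α = 4 * V) :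
    ∃ σ₀ σ₁ : Perm α, IsUniformFillingCurve σ₀ σ₁ V d (4 * V / d) := by
  obtain ⟨m, hm⟩ := (Nat.modEq_iff_dvd' hg.le).1 hmod.symm
  obtain ⟨hd, hm⟩ : d ≠ 0 ∧ m ≠ 0 := mul_ne_zero_iff.1 (by omega)
  obtain ⟨k, rfl⟩ := Nat.exists_eq_succ_of_ne_zero hm
  have hVk : 2 * V = d * (4 * k + 6) := by
    zify [hg.le] at *
    linarith
  have : NeZero d := ⟨hd⟩
  obtain ⟨P, _, D, hcard, hcursal, hface⟩ :=
    GaussDiagram.exists_isUnicursal_minimalPeriod_facePerm k d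
  classical
  have hdk : d * (2 * (4 * k + 6)) = 4 * V := by linarith
  have hD := GaussDiagram.isUniformFillingCurve (hcard.trans hVk.symm)
    (by omega) hcursal (by omega) hdk hface
  have hdarts : Fintype.card (P × Bool) = Fintype.card α := by
    rw [Fintype.card_prod, Fintype.card_bool, hcard, hα]
    linarith
  rw [← hdk, Nat.mul_div_cancel_left _ hd.bot_lt]
  exact ⟨_, _, hD.permCongr (Fintype.equivOfCardEq hdarts)⟩

/-- For every genus g ≥ 4 with g ≡ 1 (mod 3) there is a transitive monodromy
pair on 8g + 4 points consisting of 4g + 2 transpositions and 2g + 1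
four-cycles whose product σ₁σ₀ has three faces of equal degree (8g + 4)/3,
and such that σ₁²σ₀ splits as two disjoint cycles of equal length 4g + 2:
the monodromy of a uniform filling curve in general position with three faces. -/
theorem exists_uniform_filling_curve_three_faces (g : ℕ) (hg : 4 ≤ g)
    (hmod : g % 3 = 1) :
    ∃ σ₀ σ₁ : Equiv.Perm (Fin (8 * g + 4)),
      σ₀.cycleType = Multiset.replicate (4 * g + 2) 2 ∧
      σ₁.cycleType = Multiset.replicate (2 * g + 1) 4 ∧
      (σ₁ * σ₀).cycleType = Multiset.replicate 3 ((8 * g + 4) / 3) ∧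
      (∀ x y : Fin (8 * g + 4),
        ∃ π ∈ Subgroup.closure ({σ₀, σ₁} : Set (Equiv.Perm (Fin (8 * g + 4)))),
          π x = y) ∧
      (σ₁ ^ 2 * σ₀).cycleType = {4 * g + 2, 4 * g + 2} := by
  obtain ⟨σ₀, σ₁, h⟩ := exists_uniform_filling_curve_three_faces_general
    (α := Fin (8 * g + 4)) (g := g) (d := 3) (V := 2 * g + 1) (by omega) hmod (by ring)
    (by rw [Fintype.card_fin]; ring)
  have hdarts : 4 * (2 * g + 1) = 8 * g + 4 := by ring
  have hedges : 2 * (2 * g + 1) = 4 * g + 2 := by ring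
  exact ⟨σ₀, σ₁, hedges ▸ h.cycleType_edge, h.cycleType_vertex, by rw [h.cycleType_face, hdarts],
    h.transitive, hedges ▸ h.cycleType_curve⟩
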